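/- arXiv:2510.23529 — 5 statements merged into one kernel-verified Lean document; each statement's English description precedes it below -/
import Mathlib

section
/- Let A be a square matrix over a field with Drazin index ind(A) = k, and suppose X is a matrix satisfying A^k = A^{k+1}X. Then the Drazin inverse of A is given by A^D = A^k X^{k+1}; that is, the matrix Y = A^k X^{k+1} satisfies A^{k+1}Y = A^k, YAY = Y, and AY = YA. -/
/-- The Drazin index of a square matrix `A`: the smallest `k` for which there is `X`
with `A^(k+1) * X = A^k`, `X*A*X = X`, `A*X = X*A`. -/
noncomputable def drazinIndex {F ι : Type*} [Field F] [Fintype ι] [DecidableEq ι]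
    (A : Matrix ι ι F) : ℕ :=
  sInf {k : ℕ | ∃ X : Matrix ι ι F,
    A ^ (k + 1) * X = A ^ k ∧ X * A * X = X ∧ A * X = X * A}

theorem aux_left {F ι : Type*} [Field F] [Fintype ι] [DecidableEq ι]
    (A X : Matrix ι ι F) (k : ℕ) (hX : A ^ k = A ^ (k + 1) * X) :
    ∃ Z : Matrix ι ι F, A ^ k = Z * A ^ (k + 1) := by
  have hle : LinearMap.range (A ^ (k + 1)).transpose.mulVecLin ≤
      LinearMap.range (A ^ k).transpose.mulVecLin := by
    rw [pow_succ', Matrix.transpose_mul, Matrix.mulVecLin_mul]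
    exact LinearMap.range_comp_le_range _ _
  have hr : (A ^ k).transpose.rank ≤ (A ^ (k + 1)).transpose.rank := by
    rw [Matrix.rank_transpose, Matrix.rank_transpose]
    conv_lhs => rw [hX]
    exact Matrix.rank_mul_le_left _ _
  have he := Submodule.eq_of_le_of_finrank_le hle hr
  have h : ∀ j, ∃ v, (A ^ (k + 1)).transpose.mulVec v =
      (A ^ k).transpose.mulVec (Pi.single j 1) := by
    intro j
    have : (A ^ k).transpose.mulVecLin (Pi.single j 1) ∈
        LinearMap.range (A ^ (k + 1)).transpose.mulVecLin := by
      rw [he]; exact LinearMap.mem_range_self _ _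
    exact this
  choose v hv using h
  refine ⟨Matrix.of v, ?_⟩
  ext i j
  have := congrFun (hv i) j
  rw [Matrix.mulVec_single_one] at this
  simp only [Matrix.col_apply, Matrix.transpose_apply] at this
  rw [← this]
  simp [Matrix.mulVec, dotProduct, Matrix.mul_apply, mul_comm]

theorem aux_right_pow {M : Type*} [Monoid M] (A X : M) (k : ℕ)
    (hX : A ^ k = A ^ (k + 1) * X) (j : ℕ) : A ^ k = A ^ (k + j) * X ^ j := by
  induction j with
  | zero => simp
  | succ j ih =>
    have : A ^ (k + j) = A ^ (k + (j + 1)) * X := by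
      rw [add_comm k j, pow_add, hX, ← mul_assoc, ← pow_add]
      congr 2; omega
    rw [pow_succ' X, ← mul_assoc, ← this, ← ih]

theorem aux_left_pow {M : Type*} [Monoid M] (A Z : M) (k : ℕ)
    (hZ : A ^ k = Z * A ^ (k + 1)) (j : ℕ) : A ^ k = Z ^ j * A ^ (k + j) := by
  induction j with
  | zero => simp
  | succ j ih =>
    have : A ^ (k + j) = Z * A ^ (k + (j + 1)) := by
      rw [pow_add, hZ, mul_assoc, ← pow_add]
      congr 2; omega
    rw [pow_succ Z, mul_assoc, ← this, ← ih]

/-- If `ind(A) = k` and `A^k = A^(k+1) X`, then `A^D = A^k X^(k+1)`. -/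
theorem drazinInverse_eq_pow_mul_pow
    {F ι : Type*} [Field F] [Fintype ι] [DecidableEq ι]
    (A X : Matrix ι ι F) (k : ℕ) (hk : drazinIndex A = k)
    (hX : A ^ k = A ^ (k + 1) * X) :
    A ^ (k + 1) * (A ^ k * X ^ (k + 1)) = A ^ k ∧
      (A ^ k * X ^ (k + 1)) * A * (A ^ k * X ^ (k + 1)) = A ^ k * X ^ (k + 1) ∧
      A * (A ^ k * X ^ (k + 1)) = (A ^ k * X ^ (k + 1)) * A := by
  obtain ⟨Z, hZ⟩ := aux_left A X k hX
  have h1 := aux_right_pow A X k hX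
  have h2 := aux_left_pow A Z k hZ
  set Y := A ^ k * X ^ (k + 1) with hY
  have e1 : A ^ (k + 1) * Y = A ^ k := by
    rw [hY, ← mul_assoc, ← pow_add, show k + 1 + k = k + (k + 1) by omega, ← h1]
  have e2 : Y = Z ^ (k + 1) * A ^ k := by
    conv_rhs => rw [h1 (k + 1), ← mul_assoc, ← h2]
  have e3 : A * Y = Z ^ k * A ^ k := by
    have h3 : A ^ (k + 1) = Z ^ k * A ^ (k + (k + 1)) := by
      rw [← add_assoc, pow_succ, pow_succ A (k + k), ← mul_assoc, ← h2]
    rw [hY, ← mul_assoc, ← pow_succ', h3, mul_assoc, ← h1]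
  have e4 : Y * A = Z ^ k * A ^ k := by
    rw [e2, mul_assoc, ← pow_succ, pow_succ, mul_assoc, ← hZ]
  refine ⟨e1, ?_, e3.trans e4.symm⟩
  calc Y * A * Y = Z ^ (k + 1) * (A ^ (k + 1) * Y) := by
        nth_rw 1 [e2]
        rw [pow_succ A]; simp only [mul_assoc]
    _ = Y := by rw [e1, ← e2]
end

section
/- Let A and B be matrices over a field of sizes n×m and m×n respectively, so that AB is n×n and BA is m×m. Then the Drazin indices of AB and BA differ by at most one: |ind(AB) − ind(BA)| ≤ 1. -/
theorem drazin_aux_pow {F : Type*} [Field F] {m n : ℕ}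
    (A : Matrix (Fin n) (Fin m) F) (B : Matrix (Fin m) (Fin n) F) (k : ℕ) :
    (B * A) ^ k * B = B * (A * B) ^ k := by
  induction k with
  | zero => simp
  | succ k ih =>
    rw [pow_succ', Matrix.mul_assoc, ih, pow_succ']
    simp only [Matrix.mul_assoc]

theorem drazin_aux {F : Type*} [Field F] {m n : ℕ}
    (A : Matrix (Fin n) (Fin m) F) (B : Matrix (Fin m) (Fin n) F) (k : ℕ)
    (h : ∃ X : Matrix (Fin n) (Fin n) F,
      (A * B) ^ (k + 1) * X = (A * B) ^ k ∧ X * (A * B) * X = X ∧ (A * B) * X = X * (A * B)) :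
    ∃ Y : Matrix (Fin m) (Fin m) F,
      (B * A) ^ (k + 1 + 1) * Y = (B * A) ^ (k + 1) ∧ Y * (B * A) * Y = Y ∧
        (B * A) * Y = Y * (B * A) := by
  obtain ⟨X, h1, h2, h3⟩ := h
  have e1 : (A * B) * (X * X) = X := by
    rw [← Matrix.mul_assoc, h3, h2]
  have e2 : (X * X) * (A * B) = X := by
    rw [Matrix.mul_assoc, ← h3, ← Matrix.mul_assoc, h2]
  have l : (B * A) * (B * (X * X) * A) = B * X * A := by
    calc (B * A) * (B * (X * X) * A) = B * ((A * B) * (X * X)) * A := by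
          simp only [Matrix.mul_assoc]
      _ = _ := by rw [e1]
  have r : (B * (X * X) * A) * (B * A) = B * X * A := by
    calc (B * (X * X) * A) * (B * A) = B * ((X * X) * (A * B)) * A := by
          simp only [Matrix.mul_assoc]
      _ = _ := by rw [e2]
  refine ⟨B * (X * X) * A, ?_, ?_, ?_⟩
  · rw [pow_succ, Matrix.mul_assoc, l, Matrix.mul_assoc B, ← Matrix.mul_assoc, drazin_aux_pow,
      Matrix.mul_assoc, ← Matrix.mul_assoc _ X, h1, ← Matrix.mul_assoc, ← drazin_aux_pow,
      Matrix.mul_assoc, ← pow_succ]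
  · rw [r]
    calc B * X * A * (B * (X * X) * A) = B * (X * ((A * B) * (X * X))) * A := by
          simp only [Matrix.mul_assoc]
      _ = _ := by rw [e1]
  · rw [l, r]

theorem drazin_le {F : Type*} [Field F] {m n : ℕ}
    (A : Matrix (Fin n) (Fin m) F) (B : Matrix (Fin m) (Fin n) F) :
    drazinIndex (B * A) ≤ drazinIndex (A * B) + 1 := by
  by_cases hS : {k : ℕ | ∃ X : Matrix (Fin n) (Fin n) F,
      (A * B) ^ (k + 1) * X = (A * B) ^ k ∧ X * (A * B) * X = X ∧
        (A * B) * X = X * (A * B)}.Nonempty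
  · exact Nat.sInf_le (drazin_aux A B _ (Nat.sInf_mem hS))
  · have : drazinIndex (B * A) = 0 := by
      refine Nat.sInf_eq_zero.2 (Or.inr ?_)
      refine Set.eq_empty_of_forall_notMem fun k hk => hS ⟨k + 1, drazin_aux B A k hk⟩
    omega

/-- The Drazin indices of `AB` and `BA` differ by at most one. -/
theorem abs_drazinIndex_mul_sub_le_one
    {F : Type*} [Field F] {m n : ℕ}
    (A : Matrix (Fin n) (Fin m) F) (B : Matrix (Fin m) (Fin n) F) :
    |(drazinIndex (A * B) : ℤ) - (drazinIndex (B * A) : ℤ)| ≤ 1 := by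
  have h1 := drazin_le A B
  have h2 := drazin_le B A
  rw [abs_le]
  constructor <;> omega
end

section
/- Let M be the double star matrix built from a, b, x, y, z, w, and assume x^⊤y ≠ 0, z^⊤w = 0, and ζ := x^⊤y + ab ≠ 0. Then the Drazin inverse of M is N = ζ^{-1} · [[0, x^⊤, a, 0], [y, 0, 0, ζ^{-1} a y z^⊤], [b, 0, 0, ζ^{-1} a b z^⊤], [0, ζ^{-1} b w x^⊤, ζ^{-1} a b w, 0]] (same block structure as M); that is, N satisfies M^4 N = M^3, NMN = N, and MN = NM. -/
/-- The double star matrix of order `m + n + 2`, in block form (blocks of sizes 1, m, 1, n):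
`M = [[0, xᵀ, a, 0], [y, 0, 0, 0], [b, 0, 0, zᵀ], [0, 0, w, 0]]`. -/
def doubleStar {F : Type*} [Field F] {m n : ℕ} (a b : F)
    (x y : Fin m → F) (z w : Fin n → F) :
    Matrix (Fin 1 ⊕ Fin m ⊕ Fin 1 ⊕ Fin n) (Fin 1 ⊕ Fin m ⊕ Fin 1 ⊕ Fin n) F :=
  Matrix.of fun i j =>
    match i, j with
    | Sum.inl _, Sum.inr (Sum.inl j) => x j
    | Sum.inl _, Sum.inr (Sum.inr (Sum.inl _)) => a
    | Sum.inr (Sum.inl i), Sum.inl _ => y i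
    | Sum.inr (Sum.inr (Sum.inl _)), Sum.inl _ => b
    | Sum.inr (Sum.inr (Sum.inl _)), Sum.inr (Sum.inr (Sum.inr j)) => z j
    | Sum.inr (Sum.inr (Sum.inr i)), Sum.inr (Sum.inr (Sum.inl _)) => w i
    | _, _ => 0

/-- The matrix `[[0, xᵀ, a, 0], [y, 0, 0, ζ⁻¹ a y zᵀ], [b, 0, 0, ζ⁻¹ a b zᵀ],
[0, ζ⁻¹ b w xᵀ, ζ⁻¹ a b w, 0]]` (blocks of sizes 1, m, 1, n). -/
def doubleStarDrazinCore' {F : Type*} [Field F] {m n : ℕ} (a b ζ : F)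
    (x y : Fin m → F) (z w : Fin n → F) :
    Matrix (Fin 1 ⊕ Fin m ⊕ Fin 1 ⊕ Fin n) (Fin 1 ⊕ Fin m ⊕ Fin 1 ⊕ Fin n) F :=
  Matrix.of fun i j =>
    match i, j with
    | Sum.inl _, Sum.inr (Sum.inl j) => x j
    | Sum.inl _, Sum.inr (Sum.inr (Sum.inl _)) => a
    | Sum.inr (Sum.inl i), Sum.inl _ => y i
    | Sum.inr (Sum.inl i), Sum.inr (Sum.inr (Sum.inr j)) => ζ⁻¹ * a * y i * z j
    | Sum.inr (Sum.inr (Sum.inl _)), Sum.inl _ => b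
    | Sum.inr (Sum.inr (Sum.inl _)), Sum.inr (Sum.inr (Sum.inr j)) => ζ⁻¹ * a * b * z j
    | Sum.inr (Sum.inr (Sum.inr i)), Sum.inr (Sum.inl j) => ζ⁻¹ * b * w i * x j
    | Sum.inr (Sum.inr (Sum.inr i)), Sum.inr (Sum.inr (Sum.inl _)) => ζ⁻¹ * a * b * w i
    | _, _ => 0

set_option linter.unusedSimpArgs false
set_option linter.unreachableTactic false
set_option linter.unusedTactic false

abbrev DSIdx (m n : ℕ) := Fin 1 ⊕ Fin m ⊕ Fin 1 ⊕ Fin n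

def dsP {F : Type*} [Field F] {m n : ℕ} (a b ζ : F)
    (x y : Fin m → F) (z w : Fin n → F) : Matrix (DSIdx m n) (DSIdx m n) F :=
  Matrix.of fun i j =>
    match i, j with
    | Sum.inl _, Sum.inl _ => ζ
    | Sum.inl _, Sum.inr (Sum.inr (Sum.inr j)) => a * z j
    | Sum.inr (Sum.inl i), Sum.inr (Sum.inl j) => y i * x j
    | Sum.inr (Sum.inl i), Sum.inr (Sum.inr (Sum.inl _)) => a * y i
    | Sum.inr (Sum.inr (Sum.inl _)), Sum.inr (Sum.inl j) => b * x j
    | Sum.inr (Sum.inr (Sum.inl _)), Sum.inr (Sum.inr (Sum.inl _)) => a * b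
    | Sum.inr (Sum.inr (Sum.inr i)), Sum.inl _ => b * w i
    | Sum.inr (Sum.inr (Sum.inr i)), Sum.inr (Sum.inr (Sum.inr j)) => ζ⁻¹ * a * b * w i * z j
    | _, _ => 0

def dsE {F : Type*} [Field F] {m n : ℕ} (a b s : F)
    (x y : Fin m → F) (z w : Fin n → F) : Matrix (DSIdx m n) (DSIdx m n) F :=
  Matrix.of fun i j =>
    match i, j with
    | Sum.inr (Sum.inl i), Sum.inr (Sum.inr (Sum.inr j)) => - a * y i * z j
    | Sum.inr (Sum.inr (Sum.inl _)), Sum.inr (Sum.inr (Sum.inr j)) => s * z j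
    | Sum.inr (Sum.inr (Sum.inr i)), Sum.inr (Sum.inl j) => - b * w i * x j
    | Sum.inr (Sum.inr (Sum.inr i)), Sum.inr (Sum.inr (Sum.inl _)) => s * w i
    | _, _ => 0

def dsG {F : Type*} [Field F] {m n : ℕ} (s : F)
    (z w : Fin n → F) : Matrix (DSIdx m n) (DSIdx m n) F :=
  Matrix.of fun i j =>
    match i, j with
    | Sum.inr (Sum.inr (Sum.inr i)), Sum.inr (Sum.inr (Sum.inr j)) => s * w i * z j
    | _, _ => 0

theorem ds_sum {F : Type*} [Field F] {k : ℕ} (p q f : Fin k → F) (c S : F)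
    (hS : ∑ i, p i * q i = S) (hf : ∀ i, f i = c * (p i * q i)) : ∑ i, f i = c * S := by
  rw [← hS, Finset.mul_sum]; exact Finset.sum_congr rfl fun i _ => hf i

theorem ds_MC {F : Type*} [Field F] {m n : ℕ} (a b : F)
    (x y : Fin m → F) (z w : Fin n → F) (s ζ : F)
    (hs : (∑ i, x i * y i) = s) (hzw : (∑ i, z i * w i) = 0)
    (hd : s = ζ - a * b) (hζ : ζ ≠ 0) :
    doubleStar a b x y z w * doubleStarDrazinCore' a b ζ x y z w = dsP a b ζ x y z w := by
  ext i j
  rcases i with i | i | i | i <;> rcases j with j | j | j | j <;>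
    simp only [Matrix.mul_apply, Matrix.sub_apply, Matrix.smul_apply, Matrix.zero_apply, smul_eq_mul, Fintype.sum_sum_type,
      doubleStar, doubleStarDrazinCore', dsP, dsE, dsG, Matrix.of_apply, mul_zero, zero_mul,
      Finset.sum_const_zero, Finset.univ_unique, Finset.sum_singleton, add_zero, zero_add, sub_zero, sub_self]
  all_goals first
    | done
    | (subst hd; field_simp <;> ring1)
    | (rw [ds_sum x y _ (1) _ hs]; swap; (intro k; ring1); subst hd; field_simp <;> ring1)
    | (rw [ds_sum x y _ (ζ⁻¹ * a * z j) _ hs]; swap; (intro k; ring1); subst hd; field_simp <;> ring1)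
    | (rw [ds_sum z w _ (ζ⁻¹ * b * x j) _ hzw]; swap; (intro k; ring1); subst hd; field_simp <;> ring1)
    | (rw [ds_sum z w _ (ζ⁻¹ * a * b) _ hzw]; swap; (intro k; ring1); subst hd; field_simp <;> ring1)

theorem ds_CM {F : Type*} [Field F] {m n : ℕ} (a b : F)
    (x y : Fin m → F) (z w : Fin n → F) (s ζ : F)
    (hs : (∑ i, x i * y i) = s) (hzw : (∑ i, z i * w i) = 0)
    (hd : s = ζ - a * b) (hζ : ζ ≠ 0) :
    doubleStarDrazinCore' a b ζ x y z w * doubleStar a b x y z w = dsP a b ζ x y z w := by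
  ext i j
  rcases i with i | i | i | i <;> rcases j with j | j | j | j <;>
    simp only [Matrix.mul_apply, Matrix.sub_apply, Matrix.smul_apply, Matrix.zero_apply, smul_eq_mul, Fintype.sum_sum_type,
      doubleStar, doubleStarDrazinCore', dsP, dsE, dsG, Matrix.of_apply, mul_zero, zero_mul,
      Finset.sum_const_zero, Finset.univ_unique, Finset.sum_singleton, add_zero, zero_add, sub_zero, sub_self]
  all_goals first
    | done
    | (subst hd; field_simp <;> ring1)
    | (rw [ds_sum x y _ (1) _ hs]; swap; (intro k; ring1); subst hd; field_simp <;> ring1)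
    | (rw [ds_sum x y _ (ζ⁻¹ * b * w i) _ hs]; swap; (intro k; ring1); subst hd; field_simp <;> ring1)
    | (rw [ds_sum z w _ (ζ⁻¹ * a * y i) _ hzw]; swap; (intro k; ring1); subst hd; field_simp <;> ring1)
    | (rw [ds_sum z w _ (ζ⁻¹ * a * b) _ hzw]; swap; (intro k; ring1); subst hd; field_simp <;> ring1)

theorem ds_PC {F : Type*} [Field F] {m n : ℕ} (a b : F)
    (x y : Fin m → F) (z w : Fin n → F) (s ζ : F)
    (hs : (∑ i, x i * y i) = s) (hzw : (∑ i, z i * w i) = 0)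
    (hd : s = ζ - a * b) (hζ : ζ ≠ 0) :
    dsP a b ζ x y z w * doubleStarDrazinCore' a b ζ x y z w = ζ • doubleStarDrazinCore' a b ζ x y z w := by
  ext i j
  rcases i with i | i | i | i <;> rcases j with j | j | j | j <;>
    simp only [Matrix.mul_apply, Matrix.sub_apply, Matrix.smul_apply, Matrix.zero_apply, smul_eq_mul, Fintype.sum_sum_type,
      doubleStar, doubleStarDrazinCore', dsP, dsE, dsG, Matrix.of_apply, mul_zero, zero_mul,
      Finset.sum_const_zero, Finset.univ_unique, Finset.sum_singleton, add_zero, zero_add, sub_zero, sub_self]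
  all_goals first
    | done
    | (subst hd; field_simp <;> ring1)
    | (rw [ds_sum x y _ (y i) _ hs]; swap; (intro k; ring1); subst hd; field_simp <;> ring1)
    | (rw [ds_sum x y _ (ζ⁻¹ * a * y i * z j) _ hs]; swap; (intro k; ring1); subst hd; field_simp <;> ring1)
    | (rw [ds_sum x y _ (b) _ hs]; swap; (intro k; ring1); subst hd; field_simp <;> ring1)
    | (rw [ds_sum x y _ (ζ⁻¹ * a * b * z j) _ hs]; swap; (intro k; ring1); subst hd; field_simp <;> ring1)
    | (rw [ds_sum z w _ (a * ζ⁻¹ * b * x j) _ hzw]; swap; (intro k; ring1); subst hd; field_simp <;> ring1)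
    | (rw [ds_sum z w _ (a * (ζ⁻¹ * a * b)) _ hzw]; swap; (intro k; ring1); subst hd; field_simp <;> ring1)
    | (rw [ds_sum z w _ (ζ⁻¹ * a * b * w i * (ζ⁻¹ * b * x j)) _ hzw]; swap; (intro k; ring1); subst hd; field_simp <;> ring1)
    | (rw [ds_sum z w _ (ζ⁻¹ * a * b * w i * (ζ⁻¹ * a * b)) _ hzw]; swap; (intro k; ring1); subst hd; field_simp <;> ring1)

theorem ds_MP {F : Type*} [Field F] {m n : ℕ} (a b : F)
    (x y : Fin m → F) (z w : Fin n → F) (s ζ : F)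
    (hs : (∑ i, x i * y i) = s) (hzw : (∑ i, z i * w i) = 0)
    (hd : s = ζ - a * b) (hζ : ζ ≠ 0) :
    ζ • doubleStar a b x y z w - doubleStar a b x y z w * dsP a b ζ x y z w = dsE a b s x y z w := by
  ext i j
  rcases i with i | i | i | i <;> rcases j with j | j | j | j <;>
    simp only [Matrix.mul_apply, Matrix.sub_apply, Matrix.smul_apply, Matrix.zero_apply, smul_eq_mul, Fintype.sum_sum_type,
      doubleStar, doubleStarDrazinCore', dsP, dsE, dsG, Matrix.of_apply, mul_zero, zero_mul,
      Finset.sum_const_zero, Finset.univ_unique, Finset.sum_singleton, add_zero, zero_add, sub_zero, sub_self]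
  all_goals first
    | done
    | (subst hd; field_simp <;> ring1)
    | (rw [ds_sum x y _ (x j) _ hs]; swap; (intro k; ring1); subst hd; field_simp <;> ring1)
    | (rw [ds_sum x y _ (a) _ hs]; swap; (intro k; ring1); subst hd; field_simp <;> ring1)
    | (rw [ds_sum z w _ (b) _ hzw]; swap; (intro k; ring1); subst hd; field_simp <;> ring1)
    | (rw [ds_sum z w _ (ζ⁻¹ * a * b * z j) _ hzw]; swap; (intro k; ring1); subst hd; field_simp <;> ring1)

theorem ds_ME {F : Type*} [Field F] {m n : ℕ} (a b : F)
    (x y : Fin m → F) (z w : Fin n → F) (s ζ : F)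
    (hs : (∑ i, x i * y i) = s) (hzw : (∑ i, z i * w i) = 0)
    (hd : s = ζ - a * b) (hζ : ζ ≠ 0) :
    doubleStar a b x y z w * dsE a b s x y z w = dsG s z w := by
  ext i j
  rcases i with i | i | i | i <;> rcases j with j | j | j | j <;>
    simp only [Matrix.mul_apply, Matrix.sub_apply, Matrix.smul_apply, Matrix.zero_apply, smul_eq_mul, Fintype.sum_sum_type,
      doubleStar, doubleStarDrazinCore', dsP, dsE, dsG, Matrix.of_apply, mul_zero, zero_mul,
      Finset.sum_const_zero, Finset.univ_unique, Finset.sum_singleton, add_zero, zero_add, sub_zero, sub_self]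
  all_goals first
    | done
    | (subst hd; field_simp <;> ring1)
    | (rw [ds_sum x y _ (-a * z j) _ hs]; swap; (intro k; ring1); subst hd; field_simp <;> ring1)
    | (rw [ds_sum z w _ (-b * x j) _ hzw]; swap; (intro k; ring1); subst hd; field_simp <;> ring1)
    | (rw [ds_sum z w _ (s) _ hzw]; swap; (intro k; ring1); subst hd; field_simp <;> ring1)

theorem ds_MG {F : Type*} [Field F] {m n : ℕ} (a b : F)
    (x y : Fin m → F) (z w : Fin n → F) (s ζ : F)
    (hs : (∑ i, x i * y i) = s) (hzw : (∑ i, z i * w i) = 0)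
    (hd : s = ζ - a * b) (hζ : ζ ≠ 0) :
    doubleStar a b x y z w * (dsG s z w) = 0 := by
  ext i j
  rcases i with i | i | i | i <;> rcases j with j | j | j | j <;>
    simp only [Matrix.mul_apply, Matrix.sub_apply, Matrix.smul_apply, Matrix.zero_apply, smul_eq_mul, Fintype.sum_sum_type,
      doubleStar, doubleStarDrazinCore', dsP, dsE, dsG, Matrix.of_apply, mul_zero, zero_mul,
      Finset.sum_const_zero, Finset.univ_unique, Finset.sum_singleton, add_zero, zero_add, sub_zero, sub_self]
  all_goals first
    | done
    | (subst hd; field_simp <;> ring1)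
    | (rw [ds_sum z w _ (s * z j) _ hzw]; swap; (intro k; ring1); subst hd; field_simp <;> ring1)

/-- In the case `xᵀy ≠ 0`, `zᵀw = 0`, `ζ = xᵀy + ab ≠ 0`, the Drazin inverse of the
double star matrix `M` is `N = ζ⁻¹ • doubleStarDrazinCore' a b ζ x y z w`; since
`ind(M) = 3`, `N` is characterized by `M^4 N = M^3`, `NMN = N`, `MN = NM`. -/
theorem doubleStar_drazinInverse_of_ne_zero
    {F : Type*} [Field F] {m n : ℕ} (a b : F) (ha : a ≠ 0) (hb : b ≠ 0)
    (x y : Fin m → F) (z w : Fin n → F)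
    (hx : ∀ i, x i ≠ 0) (hy : ∀ i, y i ≠ 0) (hz : ∀ i, z i ≠ 0) (hw : ∀ i, w i ≠ 0)
    (hxy : (∑ i, x i * y i) ≠ 0) (hzw : (∑ i, z i * w i) = 0)
    (ζ : F) (hζdef : ζ = (∑ i, x i * y i) + a * b) (hζ : ζ ≠ 0) :
    (doubleStar a b x y z w) ^ 4 * (ζ⁻¹ • doubleStarDrazinCore' a b ζ x y z w)
        = (doubleStar a b x y z w) ^ 3 ∧
      (ζ⁻¹ • doubleStarDrazinCore' a b ζ x y z w) * (doubleStar a b x y z w) *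
          (ζ⁻¹ • doubleStarDrazinCore' a b ζ x y z w)
        = ζ⁻¹ • doubleStarDrazinCore' a b ζ x y z w ∧
      (doubleStar a b x y z w) * (ζ⁻¹ • doubleStarDrazinCore' a b ζ x y z w)
        = (ζ⁻¹ • doubleStarDrazinCore' a b ζ x y z w) * (doubleStar a b x y z w) := by
  have hd : (∑ i, x i * y i) = ζ - a * b := by rw [hζdef]; ring
  have h1 := ds_MC a b x y z w _ ζ rfl hzw hd hζ
  have h2 := ds_CM a b x y z w _ ζ rfl hzw hd hζ
  have h3 := ds_PC a b x y z w _ ζ rfl hzw hd hζ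
  have h4 := ds_MP a b x y z w _ ζ rfl hzw hd hζ
  have h5 := ds_ME a b x y z w _ ζ rfl hzw hd hζ
  have h6 := ds_MG a b x y z w _ ζ rfl hzw hd hζ
  generalize doubleStar a b x y z w = M at *
  generalize doubleStarDrazinCore' a b ζ x y z w = C at *
  generalize dsP a b ζ x y z w = P at *
  refine ⟨?_, ?_, ?_⟩
  · have h7 : M * (M * (ζ • M - M * P)) = 0 := by rw [h4, h5, h6]
    have h8 : ζ • M ^ 3 = M ^ 3 * P := by
      rw [mul_sub, mul_sub, sub_eq_zero] at h7
      simpa [pow_succ, mul_assoc] using h7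
    rw [Matrix.mul_smul, pow_succ M 3, mul_assoc, h1, ← h8, smul_smul, inv_mul_cancel₀ hζ, one_smul]
  · rw [Matrix.smul_mul, h2, Matrix.smul_mul, Matrix.mul_smul, h3, smul_smul ζ⁻¹ ζ, inv_mul_cancel₀ hζ, one_smul]
  · rw [Matrix.mul_smul, Matrix.smul_mul, h1, h2]
end

section
/- Let M be the D-linked stars matrix built from A and the vectors x_i, y_i, and assume x_i^⊤ y_i ≠ 0 for all i (so that BC is invertible). Then the group inverse of M is N = [[0, (BC)^{-1}B], [C(BC)^{-1}, −C(BC)^{-1}A(BC)^{-1}B]]; that is, N satisfies MNM = M, NMN = N, and MN = NM. -/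
open Matrix

/-- The block-diagonal matrix `B = diag(x₁ᵀ, …, xₙᵀ)`. -/
def dlinkedB {F : Type*} [Field F] {n : ℕ} {r : Fin n → ℕ}
    (x : ∀ i, Fin (r i) → F) : Matrix (Fin n) ((i : Fin n) × Fin (r i)) F :=
  Matrix.of fun i p => if i = p.1 then x p.1 p.2 else 0

/-- The block-diagonal matrix `C = diag(y₁, …, yₙ)`. -/
def dlinkedC {F : Type*} [Field F] {n : ℕ} {r : Fin n → ℕ}
    (y : ∀ i, Fin (r i) → F) : Matrix ((i : Fin n) × Fin (r i)) (Fin n) F :=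
  Matrix.of fun p j => if p.1 = j then y p.1 p.2 else 0

/-- The D-linked stars matrix `M = [[A, B], [C, 0]]`. -/
def dlinkedStars {F : Type*} [Field F] {n : ℕ} {r : Fin n → ℕ}
    (A : Matrix (Fin n) (Fin n) F) (x y : ∀ i, Fin (r i) → F) :
    Matrix (Fin n ⊕ (i : Fin n) × Fin (r i)) (Fin n ⊕ (i : Fin n) × Fin (r i)) F :=
  Matrix.fromBlocks A (dlinkedB x) (dlinkedC y) 0

theorem gi_aux {F m k : Type*} [Field F] [Fintype m] [DecidableEq m] [Fintype k] [DecidableEq k]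
    (A D : Matrix m m F) (B : Matrix m k F) (C : Matrix k m F)
    (h1 : B * C * D = 1) (h2 : D * (B * C) = 1) :
    Matrix.fromBlocks A B C 0 * Matrix.fromBlocks 0 (D * B) (C * D) (-(C * D * A * D * B)) *
      Matrix.fromBlocks A B C 0 = Matrix.fromBlocks A B C 0 ∧
    Matrix.fromBlocks 0 (D * B) (C * D) (-(C * D * A * D * B)) * Matrix.fromBlocks A B C 0 *
      Matrix.fromBlocks 0 (D * B) (C * D) (-(C * D * A * D * B)) =
      Matrix.fromBlocks 0 (D * B) (C * D) (-(C * D * A * D * B)) ∧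
    Matrix.fromBlocks A B C 0 * Matrix.fromBlocks 0 (D * B) (C * D) (-(C * D * A * D * B)) =
    Matrix.fromBlocks 0 (D * B) (C * D) (-(C * D * A * D * B)) * Matrix.fromBlocks A B C 0 := by
  have h1' : B * (C * D) = 1 := by rw [← Matrix.mul_assoc, h1]
  have h1l : ∀ (X : Matrix m k F), B * (C * (D * X)) = X := by
    intro X
    rw [← Matrix.mul_assoc C, ← Matrix.mul_assoc B, h1', Matrix.one_mul]
  have h1m : ∀ (X : Matrix m m F), B * (C * (D * X)) = X := by
    intro X
    rw [← Matrix.mul_assoc C, ← Matrix.mul_assoc B, h1', Matrix.one_mul]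
  have h2l : ∀ (X : Matrix m k F), D * (B * (C * X)) = X := by
    intro X
    rw [← Matrix.mul_assoc B, ← Matrix.mul_assoc D, h2, Matrix.one_mul]
  have h2m : ∀ (X : Matrix m m F), D * (B * (C * X)) = X := by
    intro X
    rw [← Matrix.mul_assoc B, ← Matrix.mul_assoc D, h2, Matrix.one_mul]
  have e1 : Matrix.fromBlocks A B C 0 * Matrix.fromBlocks 0 (D * B) (C * D)
      (-(C * D * A * D * B)) = Matrix.fromBlocks 1 0 0 (C * (D * B)) := by
    simp [Matrix.fromBlocks_multiply, Matrix.mul_assoc, h1', h1l, h1m]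
  have e2 : Matrix.fromBlocks 0 (D * B) (C * D) (-(C * D * A * D * B)) *
      Matrix.fromBlocks A B C 0 = Matrix.fromBlocks 1 0 0 (C * (D * B)) := by
    simp [Matrix.fromBlocks_multiply, Matrix.mul_assoc, h2]
  refine ⟨?_, ?_, e1.trans e2.symm⟩
  · rw [e1]
    simp [Matrix.fromBlocks_multiply, Matrix.mul_assoc, h2]
  · rw [e2]
    simp [Matrix.fromBlocks_multiply, Matrix.mul_assoc, h2l, h2m]

theorem dlinked_BC {F : Type*} [Field F] {n : ℕ} {r : Fin n → ℕ} (x y : ∀ i, Fin (r i) → F) :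
    dlinkedB x * dlinkedC y = Matrix.diagonal fun i => ∑ k, x i k * y i k := by
  ext i j
  simp only [Matrix.mul_apply, dlinkedB, dlinkedC, Matrix.of_apply, Fintype.sum_sigma,
    Matrix.diagonal_apply]
  rw [Finset.sum_eq_single i]
  · by_cases h : i = j <;> simp [h]
  · intro b _ hb
    simp [hb.symm]
  · simp

/-- When `xᵢᵀyᵢ ≠ 0` for every `i`, the group inverse of the D-linked stars matrix is
`N = [[0, (BC)⁻¹B], [C(BC)⁻¹, -C(BC)⁻¹A(BC)⁻¹B]]`. -/
theorem dlinkedStars_groupInverse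
    {F : Type*} [Field F] {n : ℕ} {r : Fin n → ℕ}
    (A : Matrix (Fin n) (Fin n) F) (x y : ∀ i, Fin (r i) → F)
    (hx : ∀ i k, x i k ≠ 0) (hy : ∀ i k, y i k ≠ 0)
    (hxy : ∀ i, (∑ k, x i k * y i k) ≠ 0) :
    letI B := dlinkedB x
    letI C := dlinkedC y
    letI M := dlinkedStars A x y
    letI N := Matrix.fromBlocks 0 ((B * C)⁻¹ * B) (C * (B * C)⁻¹)
      (-(C * (B * C)⁻¹ * A * (B * C)⁻¹ * B))
    M * N * M = M ∧ N * M * N = N ∧ M * N = N * M := by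
  have hu : IsUnit (dlinkedB x * dlinkedC y).det := by
    rw [dlinked_BC, Matrix.det_diagonal, isUnit_iff_ne_zero]
    exact Finset.prod_ne_zero_iff.mpr fun i _ => hxy i
  exact gi_aux A _ _ _ (Matrix.mul_nonsing_inv _ hu) (Matrix.nonsing_inv_mul _ hu)
end

section
/- Let M be the D-linked stars matrix built from A and the vectors x_i, y_i over a field 𝔽 with involution, and assume x_i* x_i ≠ 0 and y_i y_i* ≠ 0 for all i (so that BB* and C*C are invertible). Then the Moore–Penrose inverse of M is N = [[0, (C*C)^{-1}C*], [B*(BB*)^{-1}, −B*(BB*)^{-1} A (C*C)^{-1}C*]]; that is, N satisfies MNM = M, NMN = N, (MN)* = MN, and (NM)* = NM. -/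
open Matrix

theorem mp_aux {F m k : Type*} [Field F] [StarRing F] [Fintype m] [DecidableEq m] [Fintype k]
    [DecidableEq k]
    (A : Matrix m m F) (B : Matrix m k F) (C : Matrix k m F) (P : Matrix k m F)
    (Q : Matrix m k F) (hP : B * P = 1) (hQ : Q * C = 1) (hPB : (P * B)ᴴ = P * B)
    (hCQ : (C * Q)ᴴ = C * Q) :
    fromBlocks A B C 0 * fromBlocks 0 Q P (-(P * A * Q)) * fromBlocks A B C 0
      = fromBlocks A B C 0 ∧
    fromBlocks 0 Q P (-(P * A * Q)) * fromBlocks A B C 0 * fromBlocks 0 Q P (-(P * A * Q))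
      = fromBlocks 0 Q P (-(P * A * Q)) ∧
    (fromBlocks A B C 0 * fromBlocks 0 Q P (-(P * A * Q)))ᴴ
      = fromBlocks A B C 0 * fromBlocks 0 Q P (-(P * A * Q)) ∧
    (fromBlocks 0 Q P (-(P * A * Q)) * fromBlocks A B C 0)ᴴ
      = fromBlocks 0 Q P (-(P * A * Q)) * fromBlocks A B C 0 := by
  have h1 : fromBlocks A B C 0 * fromBlocks 0 Q P (-(P * A * Q))
      = fromBlocks 1 0 0 (C * Q) := by
    have : B * (P * A * Q) = A * Q := by
      rw [← Matrix.mul_assoc, ← Matrix.mul_assoc, hP, Matrix.one_mul]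
    rw [fromBlocks_multiply]
    simp [hP, this]
  have h2 : fromBlocks 0 Q P (-(P * A * Q)) * fromBlocks A B C 0
      = fromBlocks 1 0 0 (P * B) := by
    have : P * A * Q * C = P * A := by
      rw [Matrix.mul_assoc, hQ, Matrix.mul_one]
    rw [fromBlocks_multiply]
    simp [hQ, this]
  have h3 : C * Q * C = C := by rw [Matrix.mul_assoc, hQ, Matrix.mul_one]
  have h4 : P * B * P = P := by rw [Matrix.mul_assoc, hP, Matrix.mul_one]
  have h5 : P * B * (P * A * Q) = P * A * Q := by
    rw [← Matrix.mul_assoc, ← Matrix.mul_assoc, h4]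
  rw [h1, h2]
  refine ⟨?_, ?_, ?_, ?_⟩
  · rw [fromBlocks_multiply]; simp [h3]
  · rw [fromBlocks_multiply]; simp [h4, h5]
  · rw [fromBlocks_conjTranspose, hCQ]; simp
  · rw [fromBlocks_conjTranspose, hPB]; simp

/-- If `xᵢ*xᵢ ≠ 0` and `yᵢyᵢ* ≠ 0` for all `i` (so `BB*` and `C*C` are invertible),
then the Moore–Penrose inverse of the D-linked stars matrix is
`N = [[0, (C*C)⁻¹C*], [B*(BB*)⁻¹, -B*(BB*)⁻¹ A (C*C)⁻¹C*]]`. -/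
theorem dlinkedStars_moorePenrose
    {F : Type*} [Field F] [StarRing F] {n : ℕ} {r : Fin n → ℕ}
    (A : Matrix (Fin n) (Fin n) F) (x y : ∀ i, Fin (r i) → F)
    (hx : ∀ i k, x i k ≠ 0) (hy : ∀ i k, y i k ≠ 0)
    (hxs : ∀ i, (∑ k, star (x i k) * x i k) ≠ 0)
    (hys : ∀ i, (∑ k, y i k * star (y i k)) ≠ 0) :
    letI B := dlinkedB x
    letI C := dlinkedC y
    letI M := dlinkedStars A x y
    letI N := Matrix.fromBlocks 0 ((Cᴴ * C)⁻¹ * Cᴴ) (Bᴴ * (B * Bᴴ)⁻¹)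
      (-(Bᴴ * (B * Bᴴ)⁻¹ * A * (Cᴴ * C)⁻¹ * Cᴴ))
    M * N * M = M ∧ N * M * N = N ∧ (M * N)ᴴ = M * N ∧ (N * M)ᴴ = N * M := by
  have hB : dlinkedB x * (dlinkedB x)ᴴ = diagonal fun i => ∑ k, star (x i k) * x i k := by
    ext i j
    rw [Matrix.mul_apply, Fintype.sum_sigma, diagonal_apply]
    simp only [dlinkedB, conjTranspose_apply, of_apply]
    rw [Finset.sum_eq_single i]
    · by_cases h : i = j
      · subst h; simp [mul_comm]
      · simp [h, Ne.symm h]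
    · intro b _ hb; simp [hb.symm]
    · simp
  have hC : (dlinkedC y)ᴴ * dlinkedC y = diagonal fun i => ∑ k, y i k * star (y i k) := by
    ext i j
    rw [Matrix.mul_apply, Fintype.sum_sigma, diagonal_apply]
    simp only [dlinkedC, conjTranspose_apply, of_apply]
    rw [Finset.sum_eq_single i]
    · by_cases h : i = j
      · subst h; simp [mul_comm]
      · simp [h]
    · intro b _ hb; simp [hb]
    · simp
  have uB : IsUnit (dlinkedB x * (dlinkedB x)ᴴ).det := by
    rw [hB, det_diagonal]
    exact (Finset.prod_ne_zero_iff.2 fun i _ => hxs i).isUnit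
  have uC : IsUnit ((dlinkedC y)ᴴ * dlinkedC y).det := by
    rw [hC, det_diagonal]
    exact (Finset.prod_ne_zero_iff.2 fun i _ => hys i).isUnit
  have key := mp_aux A (dlinkedB x) (dlinkedC y)
    ((dlinkedB x)ᴴ * (dlinkedB x * (dlinkedB x)ᴴ)⁻¹)
    (((dlinkedC y)ᴴ * dlinkedC y)⁻¹ * (dlinkedC y)ᴴ)
    (by rw [← Matrix.mul_assoc, mul_nonsing_inv _ uB])
    (by rw [Matrix.mul_assoc, nonsing_inv_mul _ uC])
    (by simp [conjTranspose_mul, conjTranspose_nonsing_inv, Matrix.mul_assoc])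
    (by simp [conjTranspose_mul, conjTranspose_nonsing_inv, Matrix.mul_assoc])
  simp only [dlinkedStars]
  simp only [← Matrix.mul_assoc] at key ⊢
  exact key
end
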